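/- arXiv:1403.2973 — 5 statements merged into one kernel-verified Lean document; each statement's English description precedes it below -/
import Mathlib

section
/- Fix c > 0, γ ∈ (0,1) and a > 0, and define Ω on the even integers by Ω(0) = 1 and Ω(k) = exp(c·|k|^γ)·|k|^{−a} for even k ≠ 0. Then Ω is almost submultiplicative: there is a constant C ≥ 1 with Ω(k+m) ≤ C·Ω(k)·Ω(m) for all even k, m. Moreover, if a ≤ c·γ·(1−γ)·2^γ, then Ω is submultiplicative, i.e. Ω(k+m) ≤ Ω(k)·Ω(m) for all even k, m. -/
/-!
Put `f t = c * t ^ γ - a * log t`, so that the weight is `exp (f |k|)`. Let `x ≤ y` and `s` be the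
sizes of `k`, `m` and `k + m`. Concavity of `t ^ γ` gives
`s ^ γ ≤ x ^ γ + y ^ γ - (2 - 2 ^ γ) * x ^ γ`, while by the triangle inequality `log s` differs from
`log x + log y` by at most `2 * log x` plus a constant. The gain `x ^ γ` dominates this loss, which
gives almost submultiplicativity. Under the bound on `a`, the function `f` itself is nonnegative,
increasing and concave on `[2, ∞)`. A concave function on `[r, ∞)` is subadditive as soon as
`f (2 * r) ≤ 2 * f r`; at `r = 2` the logarithms in this inequality cancel because
`log 4 = 2 * log 2`, and what remains is `4 ^ γ ≤ 2 * 2 ^ γ`.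
-/

open Set Filter

section Concave

variable {𝕜 E β : Type*} [AddCommGroup β] [PartialOrder β] [IsOrderedAddMonoid β]

lemma concaveOn_add_le_add_of_mem_segment [CommRing 𝕜] [PartialOrder 𝕜] [AddCommGroup E]
    [Module 𝕜 E] [Module 𝕜 β] {s : Set E} {f : E → β}
    (hf : ConcaveOn 𝕜 s f) {w x y z : E} (hw : w ∈ s) (hz : z ∈ s) (hx : x ∈ segment 𝕜 w z)
    (hsum : x + y = w + z) : f w + f z ≤ f x + f y := by
  obtain ⟨u, v, hu, hv, huv, rfl⟩ := hx
  obtain rfl : v = 1 - u := eq_sub_of_add_eq' huv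
  obtain rfl : y = (1 - u) • w + u • z := by
    rw [eq_sub_of_add_eq' hsum]
    module
  calc f w + f z = (u • f w + (1 - u) • f z) + ((1 - u) • f w + u • f z) := by module
    _ ≤ _ := add_le_add (hf.2 hw hz hu hv huv) (hf.2 hw hz hv hu (by rwa [add_comm]))

lemma concaveOn_Ici_add_le_add [Field 𝕜] [LinearOrder 𝕜] [IsStrictOrderedRing 𝕜] [Module 𝕜 β]
    {f : 𝕜 → β} {r x y : 𝕜} (hf : ConcaveOn 𝕜 (Ici r) f)
    (hdouble : f (r + r) ≤ f r + f r) (hr : 0 ≤ r) (hx : r ≤ x) (hy : r ≤ y) :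
    f (x + y) ≤ f x + f y := by
  have exchange : ∀ u v : 𝕜, r ≤ u → r ≤ v → f r + f (u + v) ≤ f u + f (v + r) := fun u v hu hv ↦
    concaveOn_add_le_add_of_mem_segment hf self_mem_Ici (hu.trans (by linarith) : r ≤ u + v)
      (Icc_subset_segment ⟨hu, by linarith⟩) (by ring)
  have hxy : f r + f (x + y) ≤ f x + f (y + r) := exchange x y hx hy
  have hyr : f r + f (y + r) ≤ f y + f (r + r) := exchange y r hy le_rfl
  refine le_of_add_le_add_left (a := f r + f r + f (y + r)) ?_
  calc f r + f r + f (y + r) + f (x + y) = (f r + f (x + y)) + (f r + f (y + r)) := by abel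
    _ ≤ (f x + f (y + r)) + (f y + (f r + f r)) :=
      add_le_add hxy (hyr.trans (add_le_add_right hdouble _))
    _ = f r + f r + f (y + r) + (f x + f y) := by abel

end Concave

lemma rpow_add_le_rpow_add_mul_rpow {γ x y : ℝ} (hγ0 : 0 ≤ γ) (hγ1 : γ ≤ 1) (hx : 0 ≤ x)
    (hxy : x ≤ y) : (x + y) ^ γ ≤ x ^ γ + y ^ γ - (2 - 2 ^ γ) * x ^ γ := by
  have h : x ^ γ + (x + y) ^ γ ≤ y ^ γ + (2 * x) ^ γ :=
    concaveOn_add_le_add_of_mem_segment (Real.concaveOn_rpow hγ0 hγ1) hx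
      (add_nonneg hx (hx.trans hxy)) (Icc_subset_segment ⟨hxy, by linarith⟩) (by ring)
  rw [Real.mul_rpow zero_le_two hx] at h
  linarith

lemma exists_mul_log_le_mul_rpow_add {γ d r : ℝ} (b : ℝ) (hγ : 0 < γ) (hd : 0 < d) (hr : 0 < r) :
    ∃ K, ∀ x, r ≤ x → b * Real.log x ≤ d * x ^ γ + K := by
  obtain ⟨N, hN⟩ := eventually_atTop.1
    (((isLittleO_log_rpow_atTop hγ).const_mul_left b).bound hd)
  have hcont : ContinuousOn (fun x ↦ b * Real.log x) (Icc r N) :=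
    (Real.continuousOn_log.mono fun x hx ↦ (hr.trans_le hx.1).ne').const_mul b
  obtain ⟨K, hK⟩ := isCompact_Icc.bddAbove_image hcont
  refine ⟨max K 0, fun x hx ↦ ?_⟩
  have hpow : 0 ≤ x ^ γ := Real.rpow_nonneg (hr.le.trans hx) γ
  rcases le_total x N with hxN | hNx
  · calc b * Real.log x ≤ K := hK (mem_image_of_mem _ ⟨hx, hxN⟩)
      _ ≤ max K 0 := le_max_left _ _
      _ ≤ d * x ^ γ + max K 0 := le_add_of_nonneg_left (mul_nonneg hd.le hpow)
  · calc b * Real.log x ≤ ‖b * Real.log x‖ := le_abs_self _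
      _ ≤ d * ‖x ^ γ‖ := hN x hNx
      _ = d * x ^ γ := by rw [Real.norm_of_nonneg hpow]
      _ ≤ d * x ^ γ + max K 0 := le_add_of_nonneg_right (le_max_right _ _)

section TriangleLog

variable {r x y s : ℝ}

lemma log_le_of_le_add (hr : 0 < r) (hx : r ≤ x) (hy : r ≤ y) (hs : 0 < s) (hsum : s ≤ x + y) :
    Real.log s ≤ Real.log 2 + Real.log x + Real.log y - Real.log r := by
  have hx0 : 0 < x := hr.trans_le hx
  have hy0 : 0 < y := hr.trans_le hy
  have hmul : r * s ≤ 2 * x * y :=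
    calc r * s ≤ r * (x + y) := by gcongr
      _ = r * x + r * y := mul_add r x y
      _ ≤ y * x + x * y := by gcongr
      _ = 2 * x * y := by ring
  have hlog := Real.log_le_log (mul_pos hr hs) hmul
  rw [Real.log_mul hr.ne' hs.ne', Real.log_mul (by positivity) hy0.ne',
    Real.log_mul two_ne_zero hx0.ne'] at hlog
  linarith

lemma abs_log_add_log_sub_log_le (hr : 0 < r) (hx : r ≤ x) (hy : r ≤ y) (hs : r ≤ s)
    (hsum : s ≤ x + y) (hyx : y ≤ s + x) :
    |Real.log x + Real.log y - Real.log s| ≤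
      Real.log 2 + |Real.log r| + 2 * (Real.log x - Real.log r) := by
  have hupper := log_le_of_le_add hr hs hx (hr.trans_le hy) hyx
  have hlower := log_le_of_le_add hr hx hy (hr.trans_le hs) hsum
  have hrx : Real.log r ≤ Real.log x := Real.log_le_log hr hx
  rw [abs_le]
  constructor <;> linarith [le_abs_self (Real.log r), neg_abs_le (Real.log r)]

end TriangleLog

/-- The logarithm of the Gevrey–Sobolev weight `exp (c * t ^ γ) * t ^ (-a)` at radius `t`.
Because `Real.log 0 = 0`, it vanishes at `t = 0` when `γ ≠ 0`, matching the value `1` of the weight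
at the origin. -/
noncomputable def gevreyLogWeight (c γ a t : ℝ) : ℝ := c * t ^ γ - a * Real.log t

namespace gevreyLogWeight

variable {c γ a r : ℝ}

lemma apply_zero (hγ : γ ≠ 0) : gevreyLogWeight c γ a 0 = 0 := by
  simp [gevreyLogWeight, Real.zero_rpow hγ]

lemma exp_eq {t : ℝ} (ht : 0 < t) :
    Real.exp (gevreyLogWeight c γ a t) = Real.exp (c * t ^ γ) * t ^ (-a) := by
  rw [Real.rpow_def_of_pos ht (-a), ← Real.exp_add, gevreyLogWeight]
  ring_nf

lemma hasDerivAt {t : ℝ} (ht : t ≠ 0) :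
    HasDerivAt (gevreyLogWeight c γ a) (c * (γ * t ^ (γ - 1)) - a * t⁻¹) t :=
  ((Real.hasDerivAt_rpow_const (Or.inl ht)).const_mul c).sub ((Real.hasDerivAt_log ht).const_mul a)

lemma continuousOn_Ici (hr : 0 < r) : ContinuousOn (gevreyLogWeight c γ a) (Ici r) :=
  fun _ ht ↦ (hasDerivAt (hr.trans_le ht).ne').continuousAt.continuousWithinAt

lemma monotoneOn_Ici (hc : 0 ≤ c) (hγ : 0 ≤ γ) (hr : 0 < r) (ha : a ≤ c * γ * r ^ γ) :
    MonotoneOn (gevreyLogWeight c γ a) (Ici r) := by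
  have hlt : ∀ t ∈ interior (Ici r), r < t := fun t ht ↦ by rwa [interior_Ici] at ht
  refine monotoneOn_of_hasDerivWithinAt_nonneg (convex_Ici r) (continuousOn_Ici hr)
    (fun t ht ↦ (hasDerivAt (hr.trans (hlt t ht)).ne').hasDerivWithinAt) fun t ht ↦ ?_
  have ht0 : 0 < t := hr.trans (hlt t ht)
  have hat : a ≤ c * γ * t ^ γ := ha.trans (by gcongr; exact (hlt t ht).le)
  calc 0 ≤ (c * γ * t ^ γ - a) * t⁻¹ := mul_nonneg (sub_nonneg.2 hat) (inv_nonneg.2 ht0.le)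
    _ = c * (γ * t ^ (γ - 1)) - a * t⁻¹ := by rw [Real.rpow_sub_one ht0.ne']; ring

lemma concaveOn_Ici (hc : 0 ≤ c) (hγ0 : 0 ≤ γ) (hγ1 : γ ≤ 1) (hr : 0 < r)
    (ha : a ≤ c * γ * (1 - γ) * r ^ γ) : ConcaveOn ℝ (Ici r) (gevreyLogWeight c γ a) := by
  have hlt : ∀ t ∈ interior (Ici r), r < t := fun t ht ↦ by rwa [interior_Ici] at ht
  have hderiv2 : ∀ t : ℝ, t ≠ 0 → HasDerivAt (fun t ↦ c * (γ * t ^ (γ - 1)) - a * t⁻¹)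
      (c * (γ * ((γ - 1) * t ^ (γ - 1 - 1))) - a * -(t ^ 2)⁻¹) t := fun t ht ↦
    (((Real.hasDerivAt_rpow_const (Or.inl ht)).const_mul γ).const_mul c).sub
      ((hasDerivAt_inv ht).const_mul a)
  refine concaveOn_of_hasDerivWithinAt2_nonpos (convex_Ici r) (continuousOn_Ici hr)
    (fun t ht ↦ (hasDerivAt (hr.trans (hlt t ht)).ne').hasDerivWithinAt)
    (fun t ht ↦ (hderiv2 t (hr.trans (hlt t ht)).ne').hasDerivWithinAt) fun t ht ↦ ?_
  have ht0 : 0 < t := hr.trans (hlt t ht)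
  have hcoeff : 0 ≤ c * γ * (1 - γ) := mul_nonneg (mul_nonneg hc hγ0) (sub_nonneg.2 hγ1)
  have hat : a ≤ c * γ * (1 - γ) * t ^ γ := ha.trans <|
    mul_le_mul_of_nonneg_left (Real.rpow_le_rpow hr.le (hlt t ht).le hγ0) hcoeff
  calc c * (γ * ((γ - 1) * t ^ (γ - 1 - 1))) - a * -(t ^ 2)⁻¹
      = (a - c * γ * (1 - γ) * t ^ γ) * (t ^ 2)⁻¹ := by
        rw [Real.rpow_sub_one ht0.ne', Real.rpow_sub_one ht0.ne']; ring
    _ ≤ 0 := mul_nonpos_of_nonpos_of_nonneg (sub_nonpos.2 hat) (by positivity)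

variable {x y s : ℝ}

lemma monotoneOn_Ici_of_le_mul_one_sub (hc : 0 ≤ c) (hγ : 0 ≤ γ) (hr : 0 < r)
    (ha : a ≤ c * γ * (1 - γ) * r ^ γ) : MonotoneOn (gevreyLogWeight c γ a) (Ici r) :=
  monotoneOn_Ici hc hγ hr <| ha.trans <| mul_le_mul_of_nonneg_right
    (mul_le_of_le_one_right (mul_nonneg hc hγ) (sub_le_self 1 hγ)) (Real.rpow_nonneg hr.le γ)

lemma nonneg_of_two_le (hc : 0 ≤ c) (hγ0 : 0 ≤ γ) (hγ1 : γ ≤ 1)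
    (ha : a ≤ c * γ * (1 - γ) * 2 ^ γ) (hx : 2 ≤ x) : 0 ≤ gevreyLogWeight c γ a x := by
  have hlog0 : 0 ≤ Real.log 2 := Real.log_nonneg one_le_two
  have hlog1 : Real.log 2 ≤ 1 := Real.log_two_lt_d9.le.trans (by norm_num)
  have hγγ : γ * (1 - γ) ≤ 1 := mul_le_one₀ hγ1 (sub_nonneg.2 hγ1) (sub_le_self 1 hγ0)
  have hfactor : γ * (1 - γ) * Real.log 2 ≤ 1 := mul_le_one₀ hγγ hlog0 hlog1
  have htwo : a * Real.log 2 ≤ c * 2 ^ γ :=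
    calc a * Real.log 2 ≤ c * γ * (1 - γ) * 2 ^ γ * Real.log 2 := by gcongr
      _ = c * 2 ^ γ * (γ * (1 - γ) * Real.log 2) := by ring
      _ ≤ c * 2 ^ γ := mul_le_of_le_one_right (by positivity) hfactor
  exact (sub_nonneg.2 htwo).trans
    (monotoneOn_Ici_of_le_mul_one_sub hc hγ0 two_pos ha self_mem_Ici hx hx)

lemma add_le_add_of_two_le (hc : 0 ≤ c) (hγ0 : 0 ≤ γ) (hγ1 : γ ≤ 1)
    (ha : a ≤ c * γ * (1 - γ) * 2 ^ γ) (hx : 2 ≤ x) (hy : 2 ≤ y) :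
    gevreyLogWeight c γ a (x + y) ≤ gevreyLogWeight c γ a x + gevreyLogWeight c γ a y := by
  refine concaveOn_Ici_add_le_add (concaveOn_Ici hc hγ0 hγ1 two_pos ha) ?_ zero_le_two hx hy
  have hpow : c * (2 + 2) ^ γ ≤ c * (2 ^ γ + 2 ^ γ) := by
    gcongr
    exact Real.rpow_add_le_add_rpow zero_le_two zero_le_two hγ0 hγ1
  have hlog : Real.log (2 + 2) = Real.log 2 + Real.log 2 := by
    rw [← Real.log_mul two_ne_zero two_ne_zero]
    norm_num
  simp only [gevreyLogWeight, hlog]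
  linarith

lemma exists_le_add (a : ℝ) (hc : 0 < c) (hγ0 : 0 < γ) (hγ1 : γ < 1) (hr : 0 < r) :
    ∃ K, ∀ x y s, r ≤ x → r ≤ y → r ≤ s → s ≤ x + y → x ≤ s + y → y ≤ s + x →
      gevreyLogWeight c γ a s ≤ K + (gevreyLogWeight c γ a x + gevreyLogWeight c γ a y) := by
  have htwo : (2 : ℝ) ^ γ < 2 := by
    simpa only [Real.rpow_one] using Real.rpow_lt_rpow_of_exponent_lt one_lt_two hγ1
  obtain ⟨K, hK⟩ := exists_mul_log_le_mul_rpow_add (2 * |a|) hγ0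
    (mul_pos hc (sub_pos.2 htwo)) hr
  refine ⟨K + |a| * (Real.log 2 + |Real.log r| - 2 * Real.log r), ?_⟩
  intro x y s hx hy hs hsum hxy hyx
  wlog hle : x ≤ y generalizing x y
  · rw [add_comm (gevreyLogWeight c γ a x)]
    exact this y x hy hx (hsum.trans_eq (add_comm x y)) hyx hxy (le_of_not_ge hle)
  have hpow : c * s ^ γ ≤ c * (x ^ γ + y ^ γ - (2 - 2 ^ γ) * x ^ γ) := by
    gcongr
    exact (Real.rpow_le_rpow (hr.le.trans hs) hsum hγ0.le).trans
      (rpow_add_le_rpow_add_mul_rpow hγ0.le hγ1.le (hr.le.trans hx) hle)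
  have hlog : a * (Real.log x + Real.log y - Real.log s) ≤
      |a| * (Real.log 2 + |Real.log r| + 2 * (Real.log x - Real.log r)) :=
    calc _ ≤ |a| * |Real.log x + Real.log y - Real.log s| := (le_abs_self _).trans_eq (abs_mul _ _)
      _ ≤ _ := by gcongr; exact abs_log_add_log_sub_log_le hr hx hy hs hsum hyx
  simp only [gevreyLogWeight]
  linarith [hK x hx]

end gevreyLogWeight

section Separated

variable {E : Type*} [SeminormedAddGroup E] {S : AddSubmonoid E} {r : ℝ}

lemma apply_norm_add_le_of_separated {f : ℝ → ℝ} {K : ℝ} (hsep : ∀ k ∈ S, k ≠ 0 → r ≤ ‖k‖)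
    (hf0 : f 0 = 0) (hK : 0 ≤ K) (hdiag : ∀ x, r ≤ x → 0 ≤ K + (f x + f x))
    (hadd : ∀ x y s, r ≤ x → r ≤ y → r ≤ s → s ≤ x + y → x ≤ s + y → y ≤ s + x →
      f s ≤ K + (f x + f y)) {k m : E} (hk : k ∈ S) (hm : m ∈ S) :
    f ‖k + m‖ ≤ K + (f ‖k‖ + f ‖m‖) := by
  rcases eq_or_ne k 0 with rfl | hk0
  · simpa [hf0] using hK
  rcases eq_or_ne m 0 with rfl | hm0
  · simpa [hf0] using hK
  rcases eq_or_ne (k + m) 0 with hkm | hkm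
  · have hnorm : ‖m‖ = ‖k‖ := by rw [← neg_eq_of_add_eq_zero_right hkm, norm_neg]
    rw [hkm, norm_zero, hf0, hnorm]
    exact hdiag ‖k‖ (hsep k hk hk0)
  · exact hadd _ _ _ (hsep k hk hk0) (hsep m hm hm0) (hsep _ (S.add_mem hk hm) hkm)
      (norm_add_le k m) (norm_le_add_norm_add k m) (norm_le_add_norm_add' k m)

variable {c γ : ℝ}

lemma exists_gevreyLogWeight_norm_add_le (a : ℝ) (hr : 0 < r)
    (hsep : ∀ k ∈ S, k ≠ 0 → r ≤ ‖k‖) (hc : 0 < c) (hγ0 : 0 < γ) (hγ1 : γ < 1) :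
    ∃ K, 0 ≤ K ∧ ∀ k m, k ∈ S → m ∈ S → gevreyLogWeight c γ a ‖k + m‖ ≤
      K + (gevreyLogWeight c γ a ‖k‖ + gevreyLogWeight c γ a ‖m‖) := by
  obtain ⟨L, hL⟩ := exists_mul_log_le_mul_rpow_add a hγ0 hc hr
  obtain ⟨M, hM⟩ := gevreyLogWeight.exists_le_add a hc hγ0 hγ1 hr
  have hlower : ∀ x, r ≤ x → -L ≤ gevreyLogWeight c γ a x := fun x hx ↦ by
    rw [gevreyLogWeight]
    linarith [hL x hx]
  set K := max 0 (max (2 * L) M)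
  have hLK : 2 * L ≤ K := (le_max_left _ _).trans (le_max_right _ _)
  have hMK : M ≤ K := (le_max_right _ _).trans (le_max_right _ _)
  have hK : 0 ≤ K := le_max_left _ _
  refine ⟨K, hK, fun k m hk hm ↦ apply_norm_add_le_of_separated hsep
    (gevreyLogWeight.apply_zero hγ0.ne') hK (fun x hx ↦ by linarith [hlower x hx])
    (fun x y s hx hy hs hsum hxy hyx ↦ ?_) hk hm⟩
  exact (hM x y s hx hy hs hsum hxy hyx).trans (add_le_add_left hMK _)

lemma gevreyLogWeight_norm_add_le {a : ℝ} (hsep : ∀ k ∈ S, k ≠ 0 → 2 ≤ ‖k‖) (hc : 0 ≤ c)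
    (hγ0 : 0 < γ) (hγ1 : γ ≤ 1) (ha : a ≤ c * γ * (1 - γ) * 2 ^ γ) {k m : E} (hk : k ∈ S)
    (hm : m ∈ S) : gevreyLogWeight c γ a ‖k + m‖ ≤
      gevreyLogWeight c γ a ‖k‖ + gevreyLogWeight c γ a ‖m‖ := by
  have hnonneg : ∀ x, 2 ≤ x → 0 ≤ gevreyLogWeight c γ a x := fun _ ↦
    gevreyLogWeight.nonneg_of_two_le hc hγ0.le hγ1 ha
  rw [← zero_add (gevreyLogWeight c γ a ‖k‖ + _)]
  refine apply_norm_add_le_of_separated hsep (gevreyLogWeight.apply_zero hγ0.ne') le_rfl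
    (fun x hx ↦ by linarith [hnonneg x hx]) (fun x y s hx hy hs hsum _ _ ↦ ?_) hk hm
  rw [zero_add]
  exact (gevreyLogWeight.monotoneOn_Ici_of_le_mul_one_sub hc hγ0.le two_pos ha hs
    (hs.trans hsum) hsum).trans (gevreyLogWeight.add_le_add_of_two_le hc hγ0.le hγ1 ha hx hy)

theorem gevrey_sobolev_weight_almost_submultiplicative_general (hr : 0 < r)
    (hsep : ∀ k ∈ S, k ≠ 0 → r ≤ ‖k‖) (a : ℝ) (hc : 0 < c) (hγ : γ ∈ Ioo (0 : ℝ) 1)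
    (Ω : E → ℝ) (hΩ0 : Ω 0 = 1)
    (hΩ : ∀ k ∈ S, k ≠ 0 → Ω k = Real.exp (c * ‖k‖ ^ γ) * ‖k‖ ^ (-a)) :
    (∃ C : ℝ, 1 ≤ C ∧ ∀ k m, k ∈ S → m ∈ S → Ω (k + m) ≤ C * Ω k * Ω m) ∧
    (2 ≤ r → a ≤ c * γ * (1 - γ) * 2 ^ γ → ∀ k m, k ∈ S → m ∈ S → Ω (k + m) ≤ Ω k * Ω m) := by
  have hexp : ∀ k ∈ S, Ω k = Real.exp (gevreyLogWeight c γ a ‖k‖) := fun k hk ↦ by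
    rcases eq_or_ne k 0 with rfl | hk0
    · rw [hΩ0, norm_zero, gevreyLogWeight.apply_zero hγ.1.ne', Real.exp_zero]
    · rw [hΩ k hk hk0, gevreyLogWeight.exp_eq (hr.trans_le (hsep k hk hk0))]
  constructor
  · obtain ⟨K, hK, hadd⟩ := exists_gevreyLogWeight_norm_add_le a hr hsep hc hγ.1 hγ.2
    refine ⟨Real.exp K, Real.one_le_exp hK, fun k m hk hm ↦ ?_⟩
    rw [hexp k hk, hexp m hm, hexp _ (S.add_mem hk hm), mul_assoc, ← Real.exp_add,
      ← Real.exp_add, Real.exp_le_exp]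
    exact hadd k m hk hm
  · intro hr2 ha k m hk hm
    rw [hexp k hk, hexp m hm, hexp _ (S.add_mem hk hm), ← Real.exp_add, Real.exp_le_exp]
    exact gevreyLogWeight_norm_add_le (fun k hk hk0 ↦ hr2.trans (hsep k hk hk0)) hc.le hγ.1
      hγ.2.le ha hk hm

end Separated

lemma two_le_norm_of_even {k : ℤ} (hk : Even k) (hk0 : k ≠ 0) : 2 ≤ ‖k‖ := by
  have habs : 2 ≤ |k| := Int.le_of_dvd (abs_pos.2 hk0) ((dvd_abs 2 k).2 hk.two_dvd)
  rw [Int.norm_eq_abs]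
  exact_mod_cast habs

/-- Fix `c > 0`, `γ ∈ (0,1)` and `a > 0`, and define `Ω` on the even integers by
`Ω 0 = 1` and `Ω k = exp (c * |k| ^ γ) * |k| ^ (-a)` for even `k ≠ 0`.  Then `Ω` is
almost submultiplicative: there is `C ≥ 1` with `Ω (k+m) ≤ C * Ω k * Ω m` for all even
`k, m`.  Moreover, if `a ≤ c * γ * (1-γ) * 2 ^ γ`, then `Ω` is submultiplicative. -/
theorem gevrey_sobolev_weight_almost_submultiplicative
    (c γ a : ℝ) (hc : 0 < c) (hγ : γ ∈ Set.Ioo (0:ℝ) 1) (ha : 0 < a)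
    (Ω : ℤ → ℝ) (hΩ0 : Ω 0 = 1)
    (hΩ : ∀ k : ℤ, Even k → k ≠ 0 →
      Ω k = Real.exp (c * |(k:ℝ)| ^ γ) * |(k:ℝ)| ^ (-a)) :
    (∃ C : ℝ, 1 ≤ C ∧ ∀ k m : ℤ, Even k → Even m → Ω (k + m) ≤ C * Ω k * Ω m) ∧
    (a ≤ c * γ * (1 - γ) * (2:ℝ) ^ γ →
      ∀ k m : ℤ, Even k → Even m → Ω (k + m) ≤ Ω k * Ω m) := by
  simpa using gevrey_sobolev_weight_almost_submultiplicative_general (S := AddSubmonoid.even ℤ)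
    two_pos (fun _ ↦ two_le_norm_of_even) a hc hγ Ω hΩ0 hΩ
end

section
/- For every integer n ≥ 1, the sum Σ_j 1/|n² − j²|, taken over all integers j with j ≡ n (mod 2) and j ≠ ±n, satisfies Σ_j 1/|n² − j²| ≤ 2·log(6n)/n. -/
/-!
Substituting `j = n + 2k` turns `|n² - j²|` into `4 |k (k + n)|`. The terms with `k > 0` and those
with `k < -n` each form the telescoping series `∑ 1 / (m (m + n)) = Hₙ / n`, and partial fractions
sum the terms with `-n < k < 0` to `2 Hₙ₋₁ / n`, where `Hₙ` is the `n`-th harmonic number. Hence the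
sum equals `(Hₙ + Hₙ₋₁) / (2n)`, and `Hₙ ≤ 1 + log n` gives the bound.
-/

open Filter Topology Finset

theorem cast_harmonic_eq_sum_range {K : Type*} [DivisionRing K] [CharZero K] (n : ℕ) :
    (harmonic n : K) = ∑ i ∈ range n, 1 / ((i : K) + 1) := by
  simp [harmonic]

theorem harmonic_monotone : Monotone harmonic :=
  monotone_nat_of_le_succ fun n => by
    rw [harmonic_succ]
    exact le_add_of_nonneg_right (by positivity)

theorem hasSum_sub_nat_add_of_antitone {u : ℕ → ℝ} (hu : Antitone u)
    (hu0 : Tendsto u atTop (𝓝 0)) (n : ℕ) :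
    HasSum (fun m => u m - u (m + n)) (∑ i ∈ range n, u i) := by
  rw [hasSum_iff_tendsto_nat_of_nonneg fun m => sub_nonneg.2 (hu (Nat.le_add_right m n))]
  have partial_sum (N : ℕ) : ∑ m ∈ range N, (u m - u (m + n)) =
      ∑ i ∈ range n, u i - ∑ i ∈ range n, u (N + i) := by
    have hN := sum_range_add u N n
    have hn := sum_range_add u n N
    simp only [add_comm n] at hn
    rw [sum_sub_distrib]
    linarith
  have remainder : Tendsto (fun N => ∑ i ∈ range n, u (N + i)) atTop (𝓝 0) := by
    simpa using tendsto_finsetSum (range n) fun i _ => hu0.comp (tendsto_add_atTop_nat i)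
  simpa only [partial_sum, sub_zero] using remainder.const_sub (∑ i ∈ range n, u i)

theorem hasSum_one_div_mul_add_nat {n : ℕ} (hn : n ≠ 0) :
    HasSum (fun m : ℕ => 1 / (((m : ℝ) + 1) * (m + 1 + n))) (harmonic n / n) := by
  have hanti : Antitone fun m : ℕ => 1 / ((m : ℝ) + 1) := fun a b hab => by
    dsimp only
    gcongr
  have htele := (hasSum_sub_nat_add_of_antitone hanti
    tendsto_one_div_add_atTop_nhds_zero_nat n).div_const (n : ℝ)
  rw [← cast_harmonic_eq_sum_range] at htele
  refine htele.congr_fun fun m => ?_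
  push_cast
  field_simp
  ring

theorem sum_range_one_div_mul_sub {K : Type*} [Field K] [CharZero K] (n : ℕ) :
    ∑ i ∈ range n, 1 / (((i : K) + 1) * (n - i)) = 2 * harmonic n / (n + 1) := by
  have hn : (n : K) + 1 ≠ 0 := n.cast_add_one_ne_zero
  have partial_fractions : ∀ i ∈ range n, 1 / (((i : K) + 1) * (n - i)) =
      (1 / ((i : K) + 1) + 1 / (((n - 1 - i : ℕ) : K) + 1)) / (n + 1) := by
    intro i hi
    obtain ⟨q, rfl⟩ := Nat.exists_eq_add_of_lt (mem_range.1 hi)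
    have hq : i + q + 1 - 1 - i = q := by omega
    have hi1 : (i : K) + 1 ≠ 0 := i.cast_add_one_ne_zero
    have hq1 : (q : K) + 1 ≠ 0 := q.cast_add_one_ne_zero
    have hsub : ((i + q + 1 : ℕ) : K) - i = q + 1 := by push_cast; ring
    rw [hq, hsub]
    field_simp
    push_cast
    ring
  rw [sum_congr rfl partial_fractions, ← sum_div, sum_add_distrib,
    sum_range_reflect (fun i : ℕ => 1 / ((i : K) + 1)), ← cast_harmonic_eq_sum_range, two_mul]

-- The terms at `k = 0` and `k = -n` vanish because `1 / 0 = 0`.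
theorem hasSum_int_one_div_abs_mul_add {n : ℕ} (hn : n ≠ 0) :
    HasSum (fun k : ℤ => 1 / |(k : ℝ) * (k + n)|)
      (2 * (harmonic n + harmonic (n - 1)) / n) := by
  set f : ℤ → ℝ := fun k => 1 / |(k : ℝ) * (k + n)| with hf
  have hnonneg : HasSum (fun m : ℕ => f m) (harmonic n / n) := by
    have hzero : ∑ m ∈ range 1, f m = 0 := by simp [hf]
    rw [← hasSum_nat_add_iff' 1, hzero, sub_zero]
    refine (hasSum_one_div_mul_add_nat hn).congr_fun fun m => ?_
    simp only [hf]
    push_cast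
    rw [abs_of_nonneg (by positivity)]
  have hmiddle : ∑ m ∈ range n, f (-(m + 1)) = 2 * harmonic (n - 1) / n := by
    obtain ⟨p, rfl⟩ := Nat.exists_eq_succ_of_ne_zero hn
    have hend : f (-(p + 1)) = 0 := by simp [hf]
    rw [Nat.succ_eq_add_one, sum_range_succ, hend, add_zero, Nat.add_sub_cancel, Nat.cast_succ,
      ← sum_range_one_div_mul_sub]
    refine sum_congr rfl fun m hm => ?_
    have hmp : (m : ℝ) ≤ p := by exact_mod_cast (mem_range.1 hm).le
    simp only [hf]
    push_cast
    rw [abs_mul, abs_neg, abs_of_nonneg (by positivity), abs_of_nonneg (by linarith)]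
    ring
  have hneg : HasSum (fun m : ℕ => f (-(m + 1))) (2 * harmonic (n - 1) / n + harmonic n / n) := by
    rw [← hasSum_nat_add_iff' n, hmiddle, add_sub_cancel_left]
    refine (hasSum_one_div_mul_add_nat hn).congr_fun fun m => ?_
    simp only [hf]
    push_cast
    rw [← abs_of_nonneg (by positivity : 0 ≤ ((m : ℝ) + 1) * (m + 1 + n))]
    ring_nf
  have htotal : (2 * (harmonic n + harmonic (n - 1)) / n : ℝ) =
      harmonic n / n + (2 * harmonic (n - 1) / n + harmonic n / n) := by
    ring
  rw [htotal]
  exact hnonneg.of_nat_of_neg_add_one hneg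

theorem hasSum_one_div_abs_sq_sub_sq {n : ℕ} (hn : n ≠ 0) :
    HasSum (fun j : {j : ℤ // Even (j - (n : ℤ)) ∧ j ≠ (n : ℤ) ∧ j ≠ -(n : ℤ)} =>
      1 / |(n : ℝ) ^ 2 - (j.1 : ℝ) ^ 2|) ((harmonic n + harmonic (n - 1)) / (2 * n)) := by
  let halfShift (j : {j : ℤ // Even (j - (n : ℤ)) ∧ j ≠ (n : ℤ) ∧ j ≠ -(n : ℤ)}) : ℤ :=
    (j.1 - n) / 2
  have eq_add_two_mul (j) : j.1 = n + 2 * halfShift j := by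
    have := Int.ediv_two_mul_two_of_even j.2.1
    dsimp only [halfShift]
    linarith
  have injective : Function.Injective halfShift := fun a b hab =>
    Subtype.ext (by rw [eq_add_two_mul a, eq_add_two_mul b, hab])
  have support_subset (k : ℤ) (hk : k ∉ Set.range halfShift) :
      1 / |(k : ℝ) * (k + n)| = 0 := by
    have hkn : k = 0 ∨ k + n = 0 := by
      by_contra! hne
      exact hk ⟨⟨n + 2 * k, ⟨k, by ring⟩, by omega, by omega⟩, by simp [halfShift]⟩
    have hprod : (k : ℝ) * (k + n) = 0 := by exact_mod_cast mul_eq_zero.2 hkn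
    rw [hprod, abs_zero, div_zero]
  have hquarter :=
    ((injective.hasSum_iff support_subset).2 (hasSum_int_one_div_abs_mul_add hn)).div_const 4
  have htotal : ((harmonic n + harmonic (n - 1)) / (2 * n) : ℝ) =
      2 * (harmonic n + harmonic (n - 1)) / n / 4 := by
    ring
  rw [htotal]
  refine hquarter.congr_fun fun j => ?_
  have hj : (j.1 : ℝ) = n + 2 * halfShift j := by exact_mod_cast eq_add_two_mul j
  have hfactor : (n : ℝ) ^ 2 - (j.1 : ℝ) ^ 2 = -(4 * (halfShift j * (halfShift j + n))) := by
    rw [hj]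
    ring
  rw [hfactor, abs_neg, abs_mul, abs_of_pos (four_pos : (0 : ℝ) < 4), Function.comp_apply,
    div_div, mul_comm (4 : ℝ)]

/-- For every integer `n ≥ 1`, the sum `Σ_j 1/|n² - j²|` over all integers `j` with
`j ≡ n (mod 2)` and `j ≠ ±n` converges and is at most `2 * log (6n) / n`. -/
theorem sum_inv_abs_nsq_sub_jsq_le
    (n : ℕ) (hn : 1 ≤ n) :
    Summable (fun j : {j : ℤ // Even (j - (n:ℤ)) ∧ j ≠ (n:ℤ) ∧ j ≠ -(n:ℤ)} =>
      1 / |(n:ℝ)^2 - (j.1:ℝ)^2|) ∧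
    ∑' j : {j : ℤ // Even (j - (n:ℤ)) ∧ j ≠ (n:ℤ) ∧ j ≠ -(n:ℤ)},
        1 / |(n:ℝ)^2 - (j.1:ℝ)^2| ≤ 2 * Real.log (6 * n) / n := by
  have hn0 : n ≠ 0 := Nat.one_le_iff_ne_zero.1 hn
  have hsum := hasSum_one_div_abs_sq_sub_sq hn0
  refine ⟨hsum.summable, ?_⟩
  rw [hsum.tsum_eq]
  have hmono : (harmonic (n - 1) : ℝ) ≤ harmonic n :=
    Rat.cast_le.2 (harmonic_monotone n.pred_le)
  have hlog6 : 1 ≤ Real.log 6 := by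
    rw [Real.le_log_iff_exp_le (by norm_num)]
    linarith [Real.exp_one_lt_three]
  have hlogn : 0 ≤ Real.log n := Real.log_natCast_nonneg n
  calc ((harmonic n : ℝ) + harmonic (n - 1)) / (2 * n)
      ≤ (harmonic n + harmonic n) / (2 * n) := by gcongr
    _ = harmonic n / n := by field_simp; ring
    _ ≤ (1 + Real.log n) / n := by gcongr; exact harmonic_le_one_add_log n
    _ ≤ 2 * (Real.log 6 + Real.log n) / n := by gcongr; linarith
    _ = 2 * Real.log (6 * n) / n := by rw [Real.log_mul (by norm_num) (by exact_mod_cast hn0)]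
end

section
/- Let β be a real number with 1/2 < β < 1. Then there exist constants c₂ ≥ c₁ > 0 (depending only on β) such that for every integer n ≥ 1, c₁·n^{1−2β} ≤ Σ_j 1/|n² − j²|^β ≤ c₂·n^{1−2β}, where the sum runs over all integers j with j ≡ n (mod 2) and j ≠ ±n. -/
/-!
Write `|n² - j²| = |j - n| |j + n|` and let `m` be the distance from `j` to the nearer of `±n`.
The other factor is at least `max n m`, so the term at `j` is at most `(m * max n m) ^ (-β)`.
Each `m` comes from at most four `j`, and `∑ₘ (m * max n m) ^ (-β)` splits at `m = n` into
`n ^ (-β) * ∑_{m ≤ n} m ^ (-β)`, where `β < 1` enters, and `∑_{m > n} m ^ (-2β)`, where `1/2 < β`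
enters; comparison with integrals bounds both by a multiple of `n ^ (1 - 2β)`. Conversely, the `n`
integers `n + 2, n + 4, …, 3n` satisfy `|n² - j²| ≤ 8n²`, so they alone contribute at least
`n * (8n²) ^ (-β)`.
-/

open Set

lemma antitoneOn_rpow_neg_Ici {s a : ℝ} (hs : 0 ≤ s) (ha : 0 < a) :
    AntitoneOn (fun x : ℝ => x ^ (-s)) (Ici a) :=
  (Real.antitoneOn_rpow_Ioi_of_exponent_nonpos (neg_nonpos.mpr hs)).mono
    (Ici_subset_Ioi.mpr ha)

lemma sum_range_add_one_rpow_neg_le {s : ℝ} (hs₀ : 0 ≤ s) (hs₁ : s < 1) (N : ℕ) :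
    ∑ m ∈ Finset.range N, ((m : ℝ) + 1) ^ (-s) ≤ (N : ℝ) ^ (1 - s) / (1 - s) := by
  have hs : 0 < 1 - s := by linarith
  rcases N with _ | N
  · simp [Real.zero_rpow hs.ne']
  -- For `0 < s`, Lean's `0 ^ (-s) = 0` breaks antitonicity at `0`, so the first term is split off.
  have tail_le : ∑ m ∈ Finset.range N, (1 + ((m + 1 : ℕ) : ℝ)) ^ (-s) ≤
      ((1 + (N : ℝ)) ^ (1 - s) - 1) / (1 - s) :=
    calc ∑ m ∈ Finset.range N, (1 + ((m + 1 : ℕ) : ℝ)) ^ (-s)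
        ≤ ∫ x in (1 : ℝ)..1 + N, x ^ (-s) :=
          ((antitoneOn_rpow_neg_Ici hs₀ one_pos).mono Icc_subset_Ici_self).sum_le_integral
      _ = ((1 + (N : ℝ)) ^ (1 - s) - 1) / (1 - s) := by
          rw [integral_rpow (Or.inl (by linarith)), Real.one_rpow, neg_add_eq_sub]
  have one_le : 1 ≤ 1 / (1 - s) := (one_le_div hs).mpr (by linarith)
  rw [Finset.sum_range_succ']
  simp only [add_comm _ (1 : ℝ), Nat.cast_zero, add_zero, Real.one_rpow, Nat.cast_succ] at tail_le ⊢
  rw [sub_div] at tail_le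
  linarith

lemma tsum_nat_add_add_one_rpow_neg_le {s : ℝ} (hs : 1 < s) {n : ℕ} (hn : 0 < n) :
    ∑' m : ℕ, ((m + n + 1 : ℕ) : ℝ) ^ (-s) ≤ (n : ℝ) ^ (1 - s) / (s - 1) := by
  have hn' : (0 : ℝ) < n := Nat.cast_pos.mpr hn
  have hs' : -s < -1 := neg_lt_neg hs
  calc ∑' m : ℕ, ((m + n + 1 : ℕ) : ℝ) ^ (-s)
      ≤ ∫ x in Ioi (n : ℝ), x ^ (-s) :=
        (antitoneOn_rpow_neg_Ici (by linarith) hn').tsum_comp_add_le_integral n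
          (integrableOn_Ioi_rpow_of_lt hs' hn')
          fun x hx => Real.rpow_nonneg (hn'.trans hx).le _
    _ = (n : ℝ) ^ (1 - s) / (s - 1) := by
        rw [integral_Ioi_rpow_of_lt hs' hn', neg_add_eq_sub, ← neg_sub s 1, neg_div_neg_eq]

lemma hasSum_int_comp_abs {E : Type*} [AddCommGroup E] [TopologicalSpace E]
    [IsTopologicalAddGroup E] {f : ℝ → E} {S : E} (hf : HasSum (fun m : ℕ => f m) S)
    (h₀ : f 0 = 0) : HasSum (fun j : ℤ => f |(j : ℝ)|) (S + S) := by
  have h := HasSum.of_nat_of_neg (f := fun j : ℤ => f |(j : ℝ)|) (g := S) (g' := S)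
    (by simpa using hf) (by simpa using hf)
  simpa [h₀] using h

/-- The majorant `(x * max a x) ^ (-β)` of `|a² - y²| ^ (-β)` for `y` at distance `x` from the
nearer of `±a`. For `β ≠ 0` its value at `x = 0` is Lean's `0 ^ (-β) = 0`. -/
noncomputable def mulMaxKernel (β a x : ℝ) : ℝ := (x * max a x) ^ (-β)

section mulMaxKernel

variable {β a x : ℝ}

lemma mulMaxKernel_zero (hβ : β ≠ 0) : mulMaxKernel β a 0 = 0 := by
  rw [mulMaxKernel, zero_mul, Real.zero_rpow (neg_ne_zero.mpr hβ)]

lemma mulMaxKernel_nonneg (hx : 0 ≤ x) : 0 ≤ mulMaxKernel β a x :=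
  Real.rpow_nonneg (mul_nonneg hx (hx.trans (le_max_right a x))) _

lemma mulMaxKernel_of_le (hx : 0 ≤ x) (hxa : x ≤ a) :
    mulMaxKernel β a x = a ^ (-β) * x ^ (-β) := by
  rw [mulMaxKernel, max_eq_left hxa, Real.mul_rpow hx (hx.trans hxa), mul_comm]

lemma mulMaxKernel_of_ge (hx : 0 < x) (hax : a ≤ x) :
    mulMaxKernel β a x = x ^ (-(2 * β)) := by
  rw [mulMaxKernel, max_eq_right hax, Real.mul_rpow hx.le hx.le, ← Real.rpow_add hx, two_mul,
    neg_add]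

lemma rpow_neg_le_mulMaxKernel (hβ : 0 ≤ β) (hx : 0 < x) {y : ℝ} (h : x * max a x ≤ y) :
    y ^ (-β) ≤ mulMaxKernel β a x :=
  Real.rpow_le_rpow_of_nonpos (mul_pos hx (lt_max_of_lt_right hx)) h (neg_nonpos.mpr hβ)

lemma mulMaxKernel_natCast_add (n m : ℕ) :
    mulMaxKernel β n ((m + (n + 1) : ℕ) : ℝ) = ((m + n + 1 : ℕ) : ℝ) ^ (-(2 * β)) := by
  rw [mulMaxKernel_of_ge (by positivity) (by gcongr; omega), add_assoc]

lemma summable_mulMaxKernel (hβ : 1 / 2 < β) (n : ℕ) :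
    Summable fun m : ℕ => mulMaxKernel β n m := by
  rw [← summable_nat_add_iff (n + 1)]
  simp only [mulMaxKernel_natCast_add]
  exact (summable_nat_add_iff (n + 1)).mpr (Real.summable_nat_rpow.mpr (by linarith))

lemma sum_range_mulMaxKernel_le (hβ₀ : 0 < β) (hβ₁ : β < 1) {n : ℕ} (hn : 0 < n) :
    ∑ m ∈ Finset.range (n + 1), mulMaxKernel β n m ≤ (n : ℝ) ^ (1 - 2 * β) / (1 - β) := by
  have hn' : (0 : ℝ) < n := Nat.cast_pos.mpr hn
  calc ∑ m ∈ Finset.range (n + 1), mulMaxKernel β n m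
      = ∑ m ∈ Finset.range n, (n : ℝ) ^ (-β) * ((m : ℝ) + 1) ^ (-β) := by
        rw [Finset.sum_range_succ', Nat.cast_zero, mulMaxKernel_zero hβ₀.ne', add_zero]
        refine Finset.sum_congr rfl fun m hm => ?_
        rw [← Nat.cast_succ, mulMaxKernel_of_le (by positivity)
          (Nat.cast_le.mpr (Finset.mem_range.mp hm))]
    _ ≤ (n : ℝ) ^ (-β) * ((n : ℝ) ^ (1 - β) / (1 - β)) := by
        rw [← Finset.mul_sum]
        gcongr
        exact sum_range_add_one_rpow_neg_le hβ₀.le hβ₁ n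
    _ = (n : ℝ) ^ (1 - 2 * β) / (1 - β) := by
        rw [← mul_div_assoc, ← Real.rpow_add hn']
        ring_nf

lemma tsum_mulMaxKernel_le (hβ₀ : 1 / 2 < β) (hβ₁ : β < 1) {n : ℕ} (hn : 0 < n) :
    ∑' m : ℕ, mulMaxKernel β n m ≤ (1 / (1 - β) + 1 / (2 * β - 1)) * (n : ℝ) ^ (1 - 2 * β) := by
  rw [← (summable_mulMaxKernel hβ₀ n).sum_add_tsum_nat_add (n + 1), add_mul,
    one_div_mul_eq_div, one_div_mul_eq_div]
  simp only [mulMaxKernel_natCast_add]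
  exact add_le_add (sum_range_mulMaxKernel_le (by linarith) hβ₁ hn)
    (tsum_nat_add_add_one_rpow_neg_le (by linarith) hn)

end mulMaxKernel

lemma abs_sub_mul_max_le_abs_sq_sub_sq {a y : ℝ} (ha : 0 ≤ a) (hy : 0 ≤ y) :
    |y - a| * max a |y - a| ≤ |a ^ 2 - y ^ 2| := by
  have max_le_add : max a |y - a| ≤ y + a :=
    max_le (by linarith) (abs_le.mpr ⟨by linarith, by linarith⟩)
  calc |y - a| * max a |y - a| ≤ |y - a| * (y + a) := by gcongr
    _ = |a ^ 2 - y ^ 2| := by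
      rw [← abs_of_nonneg (add_nonneg hy ha), ← abs_mul, abs_sub_comm (a ^ 2)]
      ring_nf

lemma abs_sq_sub_sq_rpow_neg_le_of_nonneg {β a y : ℝ} (hβ : 0 < β) (ha : 0 ≤ a) (hy : 0 ≤ y) :
    |a ^ 2 - y ^ 2| ^ (-β) ≤ mulMaxKernel β a |y - a| := by
  obtain rfl | hya := eq_or_ne y a
  · simp [mulMaxKernel_zero hβ.ne', Real.zero_rpow (neg_ne_zero.mpr hβ.ne')]
  · exact rpow_neg_le_mulMaxKernel hβ.le (abs_pos.mpr (sub_ne_zero.mpr hya))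
      (abs_sub_mul_max_le_abs_sq_sub_sq ha hy)

lemma abs_sq_sub_sq_rpow_neg_le {β a : ℝ} (hβ : 0 < β) (ha : 0 ≤ a) (y : ℝ) :
    |a ^ 2 - y ^ 2| ^ (-β) ≤ mulMaxKernel β a |y - a| + mulMaxKernel β a |y + a| := by
  rcases le_total 0 y with hy | hy
  · exact (abs_sq_sub_sq_rpow_neg_le_of_nonneg hβ ha hy).trans
      (le_add_of_nonneg_right (mulMaxKernel_nonneg (abs_nonneg _)))
  · have h := abs_sq_sub_sq_rpow_neg_le_of_nonneg hβ ha (neg_nonneg.mpr hy)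
    rw [neg_sq, ← neg_add', abs_neg] at h
    exact h.trans (le_add_of_nonneg_left (mulMaxKernel_nonneg (abs_nonneg _)))

lemma hasSum_int_mulMaxKernel_sub_add_add {β : ℝ} (hβ : 1 / 2 < β) (n : ℕ) :
    HasSum (fun j : ℤ => mulMaxKernel β n |(j : ℝ) - n| + mulMaxKernel β n |(j : ℝ) + n|)
      (4 * ∑' m : ℕ, mulMaxKernel β n m) := by
  have h : HasSum (fun j : ℤ => mulMaxKernel β n |(j : ℝ)|)
      (2 * ∑' m : ℕ, mulMaxKernel β n m) := by
    rw [two_mul]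
    exact hasSum_int_comp_abs (summable_mulMaxKernel hβ n).hasSum (mulMaxKernel_zero (by linarith))
  have h_sub := (Equiv.subRight (n : ℤ)).hasSum_iff.mpr h
  have h_add := (Equiv.addRight (n : ℤ)).hasSum_iff.mpr h
  convert h_sub.add h_add using 1
  · simp
  · ring

-- The terms at `j = ±n` vanish, being `0 ^ (-β) = 0`.
lemma summable_int_abs_sq_sub_sq_rpow_neg {β : ℝ} (hβ : 1 / 2 < β) (n : ℕ) :
    Summable fun j : ℤ => |(n : ℝ) ^ 2 - (j : ℝ) ^ 2| ^ (-β) :=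
  (hasSum_int_mulMaxKernel_sub_add_add hβ n).summable.of_nonneg_of_le (fun _ => by positivity)
    fun j => abs_sq_sub_sq_rpow_neg_le (by linarith) n.cast_nonneg j

lemma tsum_int_abs_sq_sub_sq_rpow_neg_le {β : ℝ} (hβ₀ : 1 / 2 < β) (hβ₁ : β < 1) {n : ℕ}
    (hn : 0 < n) :
    ∑' j : ℤ, |(n : ℝ) ^ 2 - (j : ℝ) ^ 2| ^ (-β) ≤
      4 * (1 / (1 - β) + 1 / (2 * β - 1)) * (n : ℝ) ^ (1 - 2 * β) :=
  calc ∑' j : ℤ, |(n : ℝ) ^ 2 - (j : ℝ) ^ 2| ^ (-β)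
      ≤ 4 * ∑' m : ℕ, mulMaxKernel β n m :=
        hasSum_le (fun j : ℤ => abs_sq_sub_sq_rpow_neg_le (by linarith) n.cast_nonneg j)
          (summable_int_abs_sq_sub_sq_rpow_neg hβ₀ n).hasSum
          (hasSum_int_mulMaxKernel_sub_add_add hβ₀ n)
    _ ≤ 4 * (1 / (1 - β) + 1 / (2 * β - 1)) * (n : ℝ) ^ (1 - 2 * β) := by
        rw [mul_assoc]
        gcongr
        exact tsum_mulMaxKernel_le hβ₀ hβ₁ hn

/-- The index set of the sum: the integers of the same parity as `n`, other than `±n`. -/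
def sameParityIndex (n : ℕ) : Set ℤ := {j | Even (j - (n : ℤ)) ∧ j ≠ (n : ℤ) ∧ j ≠ -(n : ℤ)}

/-- The index `n + 2 * (k + 1)`; for `k < n` these are the indices `n + 2, n + 4, …, 3 * n` that
already account for the order of magnitude of the sum. -/
def sameParityIndexAbove (n : ℕ) : ℕ ↪ sameParityIndex n where
  toFun k := ⟨n + 2 * (k + 1), ⟨k + 1, by ring⟩, by omega, by omega⟩
  inj' k l h := by
    have := congrArg Subtype.val h
    dsimp only at this
    omega

lemma coe_sameParityIndexAbove (n k : ℕ) :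
    (sameParityIndexAbove n k : ℤ) = n + 2 * (k + 1) := rfl

lemma abs_sq_sub_sameParityIndexAbove_sq_le {n k : ℕ} (hk : k < n) :
    |(n : ℝ) ^ 2 - ((sameParityIndexAbove n k : ℤ) : ℝ) ^ 2| ≤ 8 * (n : ℝ) ^ 2 := by
  have hkn : (k : ℝ) + 1 ≤ n := by exact_mod_cast hk
  rw [coe_sameParityIndexAbove]
  push_cast
  calc |(n : ℝ) ^ 2 - (n + 2 * (k + 1)) ^ 2| = |-(4 * (((k : ℝ) + 1) * (n + (k + 1))))| := by
        ring_nf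
    _ = 4 * (((k : ℝ) + 1) * (n + (k + 1))) := by rw [abs_neg, abs_of_nonneg (by positivity)]
    _ ≤ 4 * ((n : ℝ) * (n + n)) := by gcongr
    _ = 8 * (n : ℝ) ^ 2 := by ring

lemma abs_sq_sub_sameParityIndex_sq_pos {n : ℕ} (j : sameParityIndex n) :
    0 < |(n : ℝ) ^ 2 - ((j : ℤ) : ℝ) ^ 2| := by
  obtain ⟨j, -, hj, hj'⟩ := j
  rw [abs_pos, sub_ne_zero, Ne, eq_comm, sq_eq_sq_iff_eq_or_eq_neg]
  exact_mod_cast not_or.mpr ⟨hj, hj'⟩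

lemma le_tsum_sameParityIndex {β : ℝ} (hβ : 1 / 2 < β) {n : ℕ} (hn : 0 < n) :
    (8 : ℝ) ^ (-β) * (n : ℝ) ^ (1 - 2 * β) ≤
      ∑' j : sameParityIndex n, |(n : ℝ) ^ 2 - ((j : ℤ) : ℝ) ^ 2| ^ (-β) := by
  have hn' : (0 : ℝ) < n := Nat.cast_pos.mpr hn
  have hsum := (summable_int_abs_sq_sub_sq_rpow_neg hβ n).subtype (sameParityIndex n)
  have le_term (k : ℕ) (hk : k ∈ Finset.range n) : (8 * (n : ℝ) ^ 2) ^ (-β) ≤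
      |(n : ℝ) ^ 2 - ((sameParityIndexAbove n k : ℤ) : ℝ) ^ 2| ^ (-β) :=
    Real.rpow_le_rpow_of_nonpos (abs_sq_sub_sameParityIndex_sq_pos _)
      (abs_sq_sub_sameParityIndexAbove_sq_le (Finset.mem_range.mp hk)) (by linarith)
  calc (8 : ℝ) ^ (-β) * (n : ℝ) ^ (1 - 2 * β) = n * (8 * (n : ℝ) ^ 2) ^ (-β) := by
        rw [Real.mul_rpow (by norm_num) (by positivity), ← Real.rpow_natCast_mul hn'.le,
          sub_eq_add_neg, Real.rpow_add hn', Real.rpow_one]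
        push_cast
        ring_nf
    _ = ∑ _k ∈ Finset.range n, (8 * (n : ℝ) ^ 2) ^ (-β) := by simp
    _ ≤ ∑ k ∈ Finset.range n, |(n : ℝ) ^ 2 - ((sameParityIndexAbove n k : ℤ) : ℝ) ^ 2| ^ (-β) :=
        Finset.sum_le_sum le_term
    _ = ∑ j ∈ (Finset.range n).map (sameParityIndexAbove n),
          |(n : ℝ) ^ 2 - ((j : ℤ) : ℝ) ^ 2| ^ (-β) := by rw [Finset.sum_map]
    _ ≤ ∑' j : sameParityIndex n, |(n : ℝ) ^ 2 - ((j : ℤ) : ℝ) ^ 2| ^ (-β) :=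
        hsum.sum_le_tsum _ fun _ _ => by positivity

/-- For `1/2 < β < 1` there are constants `c₂ ≥ c₁ > 0` (depending only on `β`) such
that for every `n ≥ 1`, `c₁ * n^(1-2β) ≤ Σ_j 1/|n² - j²|^β ≤ c₂ * n^(1-2β)`, the sum
running over integers `j` with `j ≡ n (mod 2)`, `j ≠ ±n`. -/
theorem sum_inv_abs_nsq_sub_jsq_rpow_asymp
    (β : ℝ) (hβ : β ∈ Set.Ioo (1/2 : ℝ) 1) :
    ∃ c₁ c₂ : ℝ, 0 < c₁ ∧ c₁ ≤ c₂ ∧ ∀ n : ℕ, 1 ≤ n →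
      Summable (fun j : {j : ℤ // Even (j - (n:ℤ)) ∧ j ≠ (n:ℤ) ∧ j ≠ -(n:ℤ)} =>
        1 / |(n:ℝ)^2 - (j.1:ℝ)^2| ^ β) ∧
      c₁ * (n:ℝ) ^ (1 - 2*β) ≤
        (∑' j : {j : ℤ // Even (j - (n:ℤ)) ∧ j ≠ (n:ℤ) ∧ j ≠ -(n:ℤ)},
          1 / |(n:ℝ)^2 - (j.1:ℝ)^2| ^ β) ∧
      (∑' j : {j : ℤ // Even (j - (n:ℤ)) ∧ j ≠ (n:ℤ) ∧ j ≠ -(n:ℤ)},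
          1 / |(n:ℝ)^2 - (j.1:ℝ)^2| ^ β) ≤ c₂ * (n:ℝ) ^ (1 - 2*β) := by
  obtain ⟨hβ₀, hβ₁⟩ := hβ
  simp only [one_div (_ ^ β), ← Real.rpow_neg (abs_nonneg _)]
  let C := 4 * (1 / (1 - β) + 1 / (2 * β - 1))
  refine ⟨8 ^ (-β), max (8 ^ (-β)) C, by positivity, le_max_left _ _, fun n hn => ?_⟩
  have hsum := summable_int_abs_sq_sub_sq_rpow_neg hβ₀ n
  refine ⟨hsum.subtype (sameParityIndex n), le_tsum_sameParityIndex hβ₀ hn, ?_⟩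
  calc _ ≤ ∑' j : ℤ, |(n : ℝ) ^ 2 - (j : ℝ) ^ 2| ^ (-β) :=
        hsum.tsum_subtype_le _ (sameParityIndex n) fun _ => by positivity
    _ ≤ C * (n : ℝ) ^ (1 - 2 * β) := tsum_int_abs_sq_sub_sq_rpow_neg_le hβ₀ hβ₁ hn
    _ ≤ _ := by gcongr; exact le_max_right _ _
end

section
/- Let V : 2ℤ → ℂ be Fourier coefficients of a trigonometric polynomial, i.e. suppose V(k) = 0 for all even k with |k| > M, where M ≥ 0. Then for all integers n ≥ 1 and k ≥ 1 with (k+1)·M < 2n, and for every complex z for which the denominators do not vanish, one has S_k^{21}(n,z) = 0 and S_k^{12}(n,z) = 0. -/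
/-- `Adm n j` : the index `j` runs over integers with `j ≡ n (mod 2)`, `j ≠ ±n`. -/
def Adm (n j : ℤ) : Prop := Even (j - n) ∧ j ≠ n ∧ j ≠ -n

/-- Single term of the series `S_{k+1}^{21}(n,z)` (paper index `k+1 ≥ 1`):
`V(n-j₁)V(j₁-j₂)⋯V(j_k-j_{k+1})V(j_{k+1}+n) / ((n²-j₁²+z)⋯(n²-j_{k+1}²+z))`. -/
noncomputable def term21 (V : ℤ → ℂ) (n : ℤ) (z : ℂ) (k : ℕ) (J : Fin (k+1) → ℤ) : ℂ :=
  (V (n - J 0) * (∏ i : Fin k, V (J i.castSucc - J i.succ)) * V (J (Fin.last k) + n)) /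
    (∏ i : Fin (k+1), ((n:ℂ)^2 - (J i : ℂ)^2 + z))

/-- Single term of the series `S_{k+1}^{12}(n,z)` (paper index `k+1 ≥ 1`):
`V(-n-j₁)V(j₁-j₂)⋯V(j_k-j_{k+1})V(j_{k+1}-n) / ((n²-j₁²+z)⋯(n²-j_{k+1}²+z))`. -/
noncomputable def term12 (V : ℤ → ℂ) (n : ℤ) (z : ℂ) (k : ℕ) (J : Fin (k+1) → ℤ) : ℂ :=
  (V (-n - J 0) * (∏ i : Fin k, V (J i.castSucc - J i.succ)) * V (J (Fin.last k) - n)) /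
    (∏ i : Fin (k+1), ((n:ℂ)^2 - (J i : ℂ)^2 + z))

/-- `S21 V n z k` is the paper's `S_{k+1}^{21}(n,z)`, the sum over all admissible
`j₁, …, j_{k+1}`. -/
noncomputable def S21 (V : ℤ → ℂ) (n : ℤ) (z : ℂ) (k : ℕ) : ℂ :=
  ∑' J : {J : Fin (k+1) → ℤ // ∀ i, Adm n (J i)}, term21 V n z k J.1

/-- `S12 V n z k` is the paper's `S_{k+1}^{12}(n,z)`. -/
noncomputable def S12 (V : ℤ → ℂ) (n : ℤ) (z : ℂ) (k : ℕ) : ℂ :=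
  ∑' J : {J : Fin (k+1) → ℤ // ∀ i, Adm n (J i)}, term12 V n z k J.1

/-- `β_n^+(z) = V(2n) + Σ_{k=1}^∞ S_k^{21}(n,z)`. -/
noncomputable def betaP (V : ℤ → ℂ) (n : ℤ) (z : ℂ) : ℂ :=
  V (2*n) + ∑' k : ℕ, S21 V n z k

/-- `β_n^-(z) = V(-2n) + Σ_{k=1}^∞ S_k^{12}(n,z)`. -/
noncomputable def betaM (V : ℤ → ℂ) (n : ℤ) (z : ℂ) : ℂ :=
  V (-(2*n)) + ∑' k : ℕ, S12 V n z k

/-- A weight: a positive, even function on the even integers with `Ω 0 = 1`,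
nondecreasing on the nonnegative even integers. -/
structure IsWeight (Ω : ℤ → ℝ) : Prop where
  pos : ∀ k : ℤ, Even k → 0 < Ω k
  even : ∀ k : ℤ, Even k → Ω (-k) = Ω k
  one : Ω 0 = 1
  mono : ∀ k m : ℤ, Even k → Even m → 0 ≤ k → k ≤ m → Ω k ≤ Ω m

/-!
The arguments of `V` in a numerator of `S_k^{21}(n,z)` are the `k + 1` steps of a walk from `n` to
`-n`, so they sum to `2n`; if `(k + 1) M < 2n`, one of them exceeds `M` in absolute value, and it is
even because all vertices of the walk are congruent to `n` mod 2. Hence every numerator vanishes.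
Replacing `n` by `-n` turns `S_k^{21}` into `S_k^{12}`.
-/

open Finset

theorem sum_castSucc_sub_succ {G : Type*} [AddCommGroup G] {m : ℕ} (p : Fin (m + 1) → G) :
    ∑ i : Fin m, (p i.castSucc - p i.succ) = p 0 - p (Fin.last m) := by
  have h := (Fin.sum_univ_succ p).symm.trans (Fin.sum_univ_castSucc p)
  rw [sum_sub_distrib, sub_eq_sub_iff_add_eq_add, ← h, add_comm]

theorem exists_lt_abs_castSucc_sub_succ {G : Type*} [AddCommGroup G] [LinearOrder G]
    [IsOrderedAddMonoid G] {m : ℕ} {p : Fin (m + 1) → G} {r : G}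
    (h : m • r < |p 0 - p (Fin.last m)|) : ∃ i : Fin m, r < |p i.castSucc - p i.succ| := by
  have hsum : ∑ _i : Fin m, r < ∑ i : Fin m, |p i.castSucc - p i.succ| :=
    calc ∑ _i : Fin m, r = m • r := by simp
      _ < |∑ i : Fin m, (p i.castSucc - p i.succ)| := by rwa [sum_castSucc_sub_succ]
      _ ≤ ∑ i : Fin m, |p i.castSucc - p i.succ| := abs_sum_le_sum_abs _ _
  obtain ⟨i, -, hi⟩ := exists_lt_of_sum_lt hsum
  exact ⟨i, hi⟩

theorem prod_castSucc_sub_succ_eq_zero {G R : Type*} [AddCommGroup G] [LinearOrder G]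
    [IsOrderedAddMonoid G] [CommMonoidWithZero R] {V : G → R} {s : Set G} {r : G}
    (hV : ∀ x ∈ s, r < |x| → V x = 0) {m : ℕ} {p : Fin (m + 1) → G}
    (hp : ∀ i : Fin m, p i.castSucc - p i.succ ∈ s) (h : m • r < |p 0 - p (Fin.last m)|) :
    ∏ i : Fin m, V (p i.castSucc - p i.succ) = 0 := by
  obtain ⟨i, hi⟩ := exists_lt_abs_castSucc_sub_succ h
  exact prod_eq_zero (mem_univ i) (hV _ (hp i) hi)

/-- The walk `a, j₁, …, j_m, b` from `a` to `b` through the intermediate points `J`. The arguments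
of `V` in the numerator of `S_k^{21}(n,z)` are the steps, each vertex minus the next one, of such a
walk from `n` to `-n`. -/
def walk {α : Type*} {m : ℕ} (a b : α) (J : Fin m → α) : Fin (m + 2) → α :=
  Fin.cons a (Fin.snoc J b)

section Walk

variable {α : Type*} {m : ℕ} {a b : α}

theorem walk_zero {J : Fin m → α} : walk a b J 0 = a := rfl

theorem walk_last {J : Fin m → α} : walk a b J (Fin.last (m + 1)) = b := by
  rw [walk, ← Fin.succ_last, Fin.cons_succ, Fin.snoc_last]

theorem walk_succ_castSucc {J : Fin m → α} (i : Fin m) : walk a b J i.succ.castSucc = J i := by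
  rw [walk, ← Fin.succ_castSucc, Fin.cons_succ, Fin.snoc_castSucc]

theorem forall_walk {P : α → Prop} {J : Fin m → α} (ha : P a) (hJ : ∀ i, P (J i)) (hb : P b)
    (i : Fin (m + 2)) : P (walk a b J i) := by
  refine Fin.lastCases (by rwa [walk_last]) (fun i => ?_) i
  exact Fin.cases ha (fun i => by rw [walk_succ_castSucc]; exact hJ i) i

theorem prod_walk {R : Type*} [CommMonoid R] (f : α → α → R) (a b : α) (J : Fin (m + 1) → α) :
    ∏ i : Fin (m + 2), f (walk a b J i.castSucc) (walk a b J i.succ) =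
      f a (J 0) * (∏ i : Fin m, f (J i.castSucc) (J i.succ)) * f (J (Fin.last m)) b := by
  have hfirst : walk a b J (Fin.succ 0) = J 0 := walk_succ_castSucc 0
  rw [Fin.prod_univ_succ, Fin.prod_univ_castSucc, ← mul_assoc]
  simp only [Fin.castSucc_zero, walk_zero, hfirst, walk_succ_castSucc]
  simp only [Fin.succ_castSucc, walk_succ_castSucc, Fin.succ_last, walk_last]

end Walk

theorem adm_neg (n : ℤ) : Adm (-n) = Adm n := by
  ext j
  simp only [Adm, Int.even_sub, even_neg, neg_neg, and_comm (a := j ≠ -n)]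

theorem term12_eq_term21_neg (V : ℤ → ℂ) (n : ℤ) (z : ℂ) (k : ℕ) (J : Fin (k + 1) → ℤ) :
    term12 V n z k J = term21 V (-n) z k J := by
  simp [term12, term21, sub_eq_add_neg]

theorem S12_eq_S21_neg (V : ℤ → ℂ) (n : ℤ) (z : ℂ) (k : ℕ) : S12 V n z k = S21 V (-n) z k := by
  rw [S21, adm_neg]
  exact tsum_congr fun J => term12_eq_term21_neg V n z k J

section TrigPoly

variable {V : ℤ → ℂ} {M n : ℤ} {k : ℕ}

theorem term21_eq_zero (hV : ∀ x : ℤ, Even x → M < |x| → V x = 0)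
    (hk : (k + 2) * M < |2 * n|) (z : ℂ) {J : Fin (k + 1) → ℤ} (hJ : ∀ i, Even (J i - n)) :
    term21 V n z k J = 0 := by
  have hparity : ∀ i, Even (walk n (-n) J i - n) :=
    forall_walk (P := fun x => Even (x - n)) (by simp) hJ ⟨-n, by ring⟩
  have hstep (i : Fin (k + 2)) :
      walk n (-n) J i.castSucc - walk n (-n) J i.succ ∈ {x : ℤ | Even x} := by
    simpa using (hparity i.castSucc).sub (hparity i.succ)
  have hlong : (k + 2) • M < |walk n (-n) J 0 - walk n (-n) J (Fin.last (k + 2))| := by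
    rw [walk_zero, walk_last, sub_neg_eq_add, ← two_mul]
    simpa using hk
  have hnum := prod_castSucc_sub_succ_eq_zero hV hstep hlong
  rw [prod_walk (fun x y => V (x - y)), sub_neg_eq_add] at hnum
  rw [term21, hnum, zero_div]

theorem S21_eq_zero (hV : ∀ x : ℤ, Even x → M < |x| → V x = 0)
    (hk : (k + 2) * M < |2 * n|) (z : ℂ) : S21 V n z k = 0 :=
  (tsum_congr fun J => term21_eq_zero hV hk z fun i => (J.2 i).1).trans tsum_zero

end TrigPoly

/-- If `V` are the Fourier coefficients of a trigonometric polynomial, i.e. `V k = 0`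
for all even `k` with `|k| > M`, then for all `n ≥ 1` and paper indices `K+1 ≥ 1` with
`((K+1)+1) * M < 2n`, and every `z` for which the denominators do not vanish, one has
`S_{K+1}^{21}(n,z) = 0` and `S_{K+1}^{12}(n,z) = 0`. -/
theorem S_eq_zero_of_trigPoly
    (V : ℤ → ℂ) (M : ℕ) (hV : ∀ k : ℤ, Even k → (M:ℤ) < |k| → V k = 0)
    (n : ℕ) (hn : 1 ≤ n) (K : ℕ) (hK : (K + 2) * M < 2 * n)
    (z : ℂ) (hz : ∀ j : ℤ, Adm (n:ℤ) j → (n:ℂ)^2 - (j:ℂ)^2 + z ≠ 0) :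
    S21 V (n:ℤ) z K = 0 ∧ S12 V (n:ℤ) z K = 0 := by
  have hK' : ((K : ℤ) + 2) * M < |2 * (n : ℤ)| := by
    rw [abs_of_nonneg (by positivity)]
    exact_mod_cast hK
  refine ⟨S21_eq_zero hV hK' z, ?_⟩
  rw [S12_eq_S21_neg]
  exact S21_eq_zero hV (by rwa [mul_neg, abs_neg]) z
end

section
/- Let V : 2ℤ → ℝ be a bounded function on the even integers with V(k) ≥ 0 for all even k > 0 and V(k) ≤ 0 for all even k < 0. Then for every odd integer n = 2p+1 with p ≥ 1, every term of the absolutely convergent sum S_1^{21}(n,0) = Σ_j V(n−j)V(j+n)/(n²−j²) (the sum over integers j with j ≡ n (mod 2), j ≠ ±n) is nonnegative, and consequently S_1^{21}(2p+1, 0) ≥ V(4p)·V(2)/(8p). -/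
/-!
Since `n² - j² = (n - j)(n + j)`, the term of index `j` is `q (n - j) * q (n + j)` with
`q k = V k / k`. The sign conditions on `V` say exactly that `q ≥ 0` on the even integers, so every
term is nonnegative. Convergence follows from `2|xy| ≤ x² + y²` as soon as `q` is square-summable,
and a convergent series of nonnegative terms is at least its term of index `j = n - 2`.
-/

lemma summable_norm_mul_of_summable_sq_norm {ι R : Type*} [SeminormedRing R] {f g : ι → R}
    (hf : Summable fun i => ‖f i‖ ^ 2) (hg : Summable fun i => ‖g i‖ ^ 2) :
    Summable fun i => ‖f i * g i‖ := by
  refine (hf.add hg).of_nonneg_of_le (fun i => norm_nonneg _) fun i => ?_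
  calc ‖f i * g i‖ ≤ ‖f i‖ * ‖g i‖ := norm_mul_le _ _
    _ ≤ 2 * ‖f i‖ * ‖g i‖ := by
      rw [mul_assoc]
      exact le_mul_of_one_le_left (by positivity) one_le_two
    _ ≤ ‖f i‖ ^ 2 + ‖g i‖ ^ 2 := two_mul_le_add_sq _ _

lemma summable_sq_div_int_of_abs_le {s : Set ℤ} {V : ℤ → ℝ} {B : ℝ}
    (hV : ∀ k ∈ s, |V k| ≤ B) : Summable fun k : s => (V k / (k : ℤ)) ^ 2 := by
  have hsum : Summable fun k : s => B ^ 2 * (1 / ((k : ℤ) : ℝ) ^ 2) :=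
    ((Real.summable_one_div_int_pow.mpr one_lt_two).mul_left (B ^ 2)).subtype s
  refine hsum.of_nonneg_of_le (fun k => sq_nonneg _) fun k => ?_
  have hk : V k ^ 2 ≤ B ^ 2 := sq_le_sq.mpr ((hV k k.2).trans (le_abs_self B))
  rw [div_pow, mul_one_div]
  gcongr

namespace Adm

variable {n j : ℤ}

lemma even_sub (h : Adm n j) : Even (n - j) :=
  neg_sub j n ▸ h.1.neg

lemma even_add (h : Adm n j) : Even (j + n) :=
  Int.even_add.mpr (Int.even_sub.mp h.1)

lemma sub_two (hn : n ≠ 1) : Adm n (n - 2) :=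
  ⟨⟨-1, by lia⟩, by lia, by lia⟩

end Adm

lemma mul_div_sq_sub_sq_eq {K : Type*} [Field K] (V : ℤ → K) (n j : ℤ) :
    V (n - j) * V (j + n) / ((n : K) ^ 2 - (j : K) ^ 2) =
      V (n - j) / ((n - j : ℤ) : K) * (V (j + n) / ((j + n : ℤ) : K)) := by
  rw [div_mul_div_comm]
  push_cast
  ring

lemma div_nonneg_of_sign {K : Type*} [Field K] [LinearOrder K] [IsStrictOrderedRing K] {a x : K}
    (hpos : 0 < x → 0 ≤ a) (hneg : x < 0 → a ≤ 0) : 0 ≤ a / x := by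
  rcases lt_trichotomy x 0 with hx | rfl | hx
  · exact div_nonneg_of_nonpos (hneg hx) hx.le
  · exact (div_zero a).ge
  · exact div_nonneg (hpos hx) hx.le

lemma mul_div_sq_sub_sq_nonneg {K : Type*} [Field K] [LinearOrder K] [IsStrictOrderedRing K]
    {V : ℤ → K} (hpos : ∀ k : ℤ, Even k → 0 < k → 0 ≤ V k)
    (hneg : ∀ k : ℤ, Even k → k < 0 → V k ≤ 0) {n j : ℤ} (hj : Adm n j) :
    0 ≤ V (n - j) * V (j + n) / ((n : K) ^ 2 - (j : K) ^ 2) := by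
  have hq (k : ℤ) (hk : Even k) : 0 ≤ V k / (k : K) :=
    div_nonneg_of_sign (fun h => hpos k hk (Int.cast_pos.mp h))
      fun h => hneg k hk (Int.cast_lt_zero.mp h)
  rw [mul_div_sq_sub_sq_eq]
  exact mul_nonneg (hq _ hj.even_sub) (hq _ hj.even_add)

lemma summable_norm_mul_div_sq_sub_sq {K : Type*} [NormedField K] {V : ℤ → K}
    (hV : Summable fun k : {k : ℤ // Even k} => ‖V k / ((k : ℤ) : K)‖ ^ 2) (n : ℤ) :
    Summable fun j : {j : ℤ // Adm n j} =>
      ‖V (n - j.1) * V (j.1 + n) / ((n : K) ^ 2 - (j.1 : K) ^ 2)‖ := by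
  have hsub : Function.Injective fun j : {j : ℤ // Adm n j} =>
      (⟨n - j.1, j.2.even_sub⟩ : {k : ℤ // Even k}) :=
    fun i j h => Subtype.ext (by simpa using h)
  have hadd : Function.Injective fun j : {j : ℤ // Adm n j} =>
      (⟨j.1 + n, j.2.even_add⟩ : {k : ℤ // Even k}) :=
    fun i j h => Subtype.ext (by simpa using h)
  simp only [mul_div_sq_sub_sq_eq]
  have hsumSub : Summable fun j : {j : ℤ // Adm n j} => ‖V (n - j.1) / ((n - j.1 : ℤ) : K)‖ ^ 2 :=
    (hV.comp_injective hsub :)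
  have hsumAdd : Summable fun j : {j : ℤ // Adm n j} => ‖V (j.1 + n) / ((j.1 + n : ℤ) : K)‖ ^ 2 :=
    (hV.comp_injective hadd :)
  exact summable_norm_mul_of_summable_sq_norm hsumSub hsumAdd

/-- The square-summability of `V k / k` is the condition that `V` is the sequence of Fourier
coefficients of an `H⁻¹` potential; its term at `k = 0` is `0`, because `x / 0 = 0`. -/
theorem S1_pos_terms_lower_bound_general
    (V : ℤ → ℝ) (hV : Summable fun k : {k : ℤ // Even k} => (V k / (k : ℤ)) ^ 2)
    (hpos : ∀ k : ℤ, Even k → 0 < k → 0 ≤ V k)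
    (hneg : ∀ k : ℤ, Even k → k < 0 → V k ≤ 0)
    (n : ℤ) (hn : n ≠ 1) :
    Summable (fun j : {j : ℤ // Adm n j} =>
      |V (n - j.1) * V (j.1 + n) / ((n : ℝ) ^ 2 - (j.1 : ℝ) ^ 2)|) ∧
    (∀ j : {j : ℤ // Adm n j},
      0 ≤ V (n - j.1) * V (j.1 + n) / ((n : ℝ) ^ 2 - (j.1 : ℝ) ^ 2)) ∧
    V (2 * n - 2) * V 2 / (4 * ((n : ℝ) - 1)) ≤
      ∑' j : {j : ℤ // Adm n j},
        V (n - j.1) * V (j.1 + n) / ((n : ℝ) ^ 2 - (j.1 : ℝ) ^ 2) := by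
  have hsum := summable_norm_mul_div_sq_sub_sq (V := V)
    (by simpa only [Real.norm_eq_abs, sq_abs] using hV) n
  have hnonneg (j : {j : ℤ // Adm n j}) := mul_div_sq_sub_sq_nonneg hpos hneg j.2
  refine ⟨hsum, hnonneg, ?_⟩
  calc V (2 * n - 2) * V 2 / (4 * ((n : ℝ) - 1))
      = V (n - (n - 2)) * V (n - 2 + n) / ((n : ℝ) ^ 2 - ((n - 2 : ℤ) : ℝ) ^ 2) := by
        rw [sub_sub_cancel, mul_comm (V 2)]
        push_cast
        ring_nf
    _ ≤ _ := hsum.of_norm.le_tsum ⟨n - 2, Adm.sub_two hn⟩ fun j _ => hnonneg j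

/-- Let `V : 2ℤ → ℝ` be bounded on the even integers, with `V k ≥ 0` for even `k > 0`
and `V k ≤ 0` for even `k < 0`.  Then for every odd `n = 2p+1` with `p ≥ 1`, the sum
`S_1^{21}(n,0) = Σ_j V(n-j) V(j+n) / (n² - j²)` (over integers `j ≡ n (mod 2)`,
`j ≠ ±n`) converges absolutely, every term is nonnegative, and consequently
`S_1^{21}(2p+1, 0) ≥ V(4p) V(2) / (8p)`. -/
theorem S1_pos_terms_lower_bound
    (V : ℤ → ℝ) (B : ℝ) (hB : ∀ k : ℤ, Even k → |V k| ≤ B)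
    (hpos : ∀ k : ℤ, Even k → 0 < k → 0 ≤ V k)
    (hneg : ∀ k : ℤ, Even k → k < 0 → V k ≤ 0)
    (p : ℕ) (hp : 1 ≤ p) (n : ℤ) (hn : n = 2 * (p:ℤ) + 1) :
    Summable (fun j : {j : ℤ // Adm n j} =>
      |V (n - j.1) * V (j.1 + n) / ((n:ℝ)^2 - (j.1:ℝ)^2)|) ∧
    (∀ j : {j : ℤ // Adm n j},
      0 ≤ V (n - j.1) * V (j.1 + n) / ((n:ℝ)^2 - (j.1:ℝ)^2)) ∧
    V (4 * (p:ℤ)) * V 2 / (8 * (p:ℝ)) ≤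
      ∑' j : {j : ℤ // Adm n j}, V (n - j.1) * V (j.1 + n) / ((n:ℝ)^2 - (j.1:ℝ)^2) := by
  rw [show 4 * (p : ℤ) = 2 * n - 2 by lia, show 8 * (p : ℝ) = 4 * (n - 1) by push_cast [hn]; ring]
  exact S1_pos_terms_lower_bound_general V (summable_sq_div_int_of_abs_le hB) hpos hneg n (by lia)
end
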